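/- For every prime power q ≥ 4 there exists a finite q-regular simple graph of girth 8 with exactly 2q(q² − 2) vertices. -/

import Mathlib

/-- The incidence graph of a relation `I` between points and lines. -/
def incidenceGraph {P L : Type} (I : P → L → Prop) : SimpleGraph (P ⊕ L) where
  Adj
    | .inl p, .inr l => I p l
    | .inr l, .inl p => I p l
    | _, _ => False
  symm := ⟨by rintro (p | l) (p' | l') h <;> exact h⟩
  loopless := ⟨by rintro (p | l) h <;> exact h⟩

section IncidenceGraph

variable {P L : Type} {I : P → L → Prop}

lemma incidenceGraph_adj_inl {p : P} {v : P ⊕ L} :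
    (incidenceGraph I).Adj (.inl p) v ↔ ∃ l, v = .inr l ∧ I p l := by
  rcases v with p' | l <;> simp [incidenceGraph]

lemma incidenceGraph_adj_inr {l : L} {v : P ⊕ L} :
    (incidenceGraph I).Adj (.inr l) v ↔ ∃ p, v = .inl p ∧ I p l := by
  rcases v with p | l' <;> simp [incidenceGraph]

lemma incidenceGraph_isLeft_of_adj {v w : P ⊕ L} (h : (incidenceGraph I).Adj v w) :
    w.isLeft = !v.isLeft := by
  rcases v with p | l <;> rcases w with p' | l' <;> simp_all [incidenceGraph]

/-- An incidence structure without digons and triangles has an incidence graph of girth at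
least `8`. -/
lemma eight_le_egirth_incidenceGraph
    (digon : ∀ p p' l l', I p l → I p l' → I p' l → I p' l' → p ≠ p' → l = l')
    (triangle : ∀ p₁ p₂ p₃ l₁ l₂ l₃, I p₁ l₁ → I p₂ l₁ → I p₂ l₂ → I p₃ l₂ → I p₃ l₃ → I p₁ l₃ →
      p₁ ≠ p₂ → p₁ ≠ p₃ → l₁ = l₃) :
    8 ≤ (incidenceGraph I).egirth := by
  rw [SimpleGraph.le_egirth]
  intro a w hw
  have h3 := hw.three_le_length
  have hn := hw.support_nodup
  by_contra! hlt
  replace hlt : w.length < 8 := by exact_mod_cast hlt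
  clear hw
  have side {v w} := incidenceGraph_isLeft_of_adj (I := I) (v := v) (w := w)
  rcases w with _ | ⟨h₁, w⟩
  · simp at h3
  rcases w with _ | ⟨h₂, w⟩
  · simp at h3
  rcases w with _ | ⟨h₃, w⟩
  · simp at h3
  rcases w with _ | ⟨h₄, w⟩
  · have e := side h₃
    rw [side h₂, side h₁] at e
    exact absurd e (by cases a.isLeft <;> decide)
  rcases w with _ | ⟨h₅, w⟩
  · rcases a with p | l
    · obtain ⟨l₁, rfl, i₁⟩ := incidenceGraph_adj_inl.mp h₁
      obtain ⟨p₂, rfl, i₂⟩ := incidenceGraph_adj_inr.mp h₂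
      obtain ⟨l₃, rfl, i₃⟩ := incidenceGraph_adj_inl.mp h₃
      simp at hn
      exact hn.1 (digon p p₂ l₁ l₃ i₁ h₄.symm i₂ i₃ (Ne.symm hn.2))
    · obtain ⟨p₁, rfl, i₁⟩ := incidenceGraph_adj_inr.mp h₁
      obtain ⟨l₂, rfl, i₂⟩ := incidenceGraph_adj_inl.mp h₂
      obtain ⟨p₃, rfl, i₃⟩ := incidenceGraph_adj_inr.mp h₃
      simp at hn
      exact hn.2 (digon p₁ p₃ l₂ l i₂ i₁ i₃ h₄ hn.1)
  rcases w with _ | ⟨h₆, w⟩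
  · have e := side h₅
    rw [side h₄, side h₃, side h₂, side h₁] at e
    exact absurd e (by cases a.isLeft <;> decide)
  rcases w with _ | ⟨h₇, w⟩
  · rcases a with p | l
    · obtain ⟨l₁, rfl, i₁⟩ := incidenceGraph_adj_inl.mp h₁
      obtain ⟨p₂, rfl, i₂⟩ := incidenceGraph_adj_inr.mp h₂
      obtain ⟨l₃, rfl, i₃⟩ := incidenceGraph_adj_inl.mp h₃
      obtain ⟨p₄, rfl, i₄⟩ := incidenceGraph_adj_inr.mp h₄
      obtain ⟨l₅, rfl, i₅⟩ := incidenceGraph_adj_inl.mp h₅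
      have i₆ : I p l₅ := h₆.symm
      simp at hn
      grind
    · obtain ⟨p₁, rfl, i₁⟩ := incidenceGraph_adj_inr.mp h₁
      obtain ⟨l₂, rfl, i₂⟩ := incidenceGraph_adj_inl.mp h₂
      obtain ⟨p₃, rfl, i₃⟩ := incidenceGraph_adj_inr.mp h₃
      obtain ⟨l₄, rfl, i₄⟩ := incidenceGraph_adj_inl.mp h₄
      obtain ⟨p₅, rfl, i₅⟩ := incidenceGraph_adj_inr.mp h₅
      have i₆ : I p₅ l := h₆
      simp at hn
      grind
  rcases w with _ | ⟨h₈, w⟩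
  · have e := side h₇
    rw [side h₆, side h₅, side h₄, side h₃, side h₂, side h₁] at e
    exact absurd e (by cases a.isLeft <;> decide)
  simp at hlt
  omega

/-- A quadrangle gives a cycle of length `8` in the incidence graph. -/
lemma egirth_incidenceGraph_le_eight {p₁ p₂ p₃ p₄ : P} {l₁ l₂ l₃ l₄ : L}
    (h₁ : I p₁ l₁) (h₁' : I p₂ l₁) (h₂ : I p₂ l₂) (h₂' : I p₃ l₂) (h₃ : I p₃ l₃)
    (h₃' : I p₄ l₃) (h₄ : I p₄ l₄) (h₄' : I p₁ l₄)
    (hp : [p₁, p₂, p₃, p₄].Nodup) (hl : [l₁, l₂, l₃, l₄].Nodup) :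
    (incidenceGraph I).egirth ≤ 8 := by
  have adj {p l} (h : I p l) : (incidenceGraph I).Adj (.inl p) (.inr l) := h
  let w : (incidenceGraph I).Walk (.inl p₁) (.inl p₁) :=
    .cons (adj h₁) <| .cons (adj h₁').symm <| .cons (adj h₂) <| .cons (adj h₂').symm <|
    .cons (adj h₃) <| .cons (adj h₃').symm <| .cons (adj h₄) <| .cons (adj h₄').symm .nil
  have hw : w.IsCycle := by
    simp only [List.nodup_cons, List.mem_cons, List.not_mem_nil, or_false, not_or] at hp hl
    rw [SimpleGraph.Walk.isCycle_def, SimpleGraph.Walk.isTrail_def]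
    refine ⟨?_, by simp [w], ?_⟩
    · simp [w]
      grind
    · simp [w]
      grind
  exact SimpleGraph.egirth_le_length hw

end IncidenceGraph

namespace SymplecticQuadrangle

variable (F : Type) [Field F]

/-- The points `((a, b), (c, b + 1))` of the symplectic quadrangle on `F² ⊕ F²`, normalized off
the hyperplane orthogonal to `((1, 0), (1, 0))`, with both components nonzero. -/
@[ext] structure Point where
  a : F
  b : F
  c : F
  fst_ne : ¬ (a = 0 ∧ b = 0)
  snd_ne : ¬ (c = 0 ∧ b + 1 = 0)

/-- The matrices `!![α, β; γ, δ]` of determinant `1` that do not fix `(1, 0)`; a matrix stands for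
its graph, which is a totally isotropic line. -/
@[ext] structure Line where
  α : F
  β : F
  γ : F
  δ : F
  det_eq : α * δ - β * γ = 1
  not_fix : ¬ (α = 1 ∧ γ = 0)

variable {F}

/-- A point lies on a line when the matrix maps its first component to its second. -/
def Incident (p : Point F) (l : Line F) : Prop :=
  l.α * p.a + l.β * p.b = p.c ∧ l.γ * p.a + l.δ * p.b = p.b + 1

lemma eq_of_det_eq_zero {p p' : Point F} {l : Line F} (h : Incident p l) (h' : Incident p' l)
    (hd : p.a * p'.b = p'.a * p.b) : p = p' := by
  obtain ⟨h1, h2⟩ := h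
  obtain ⟨h3, h4⟩ := h'
  have hb : p.b = p'.b := by
    linear_combination p'.b * h2 - p.b * h4 - l.γ * hd
  have ha : p.a = p'.a := by
    linear_combination p'.a * h2 - p.a * h4 + (l.δ - 1) * hd
  have hc : p.c = p'.c := by rw [← h1, ← h3, ha, hb]
  exact Point.ext ha hb hc

lemma line_eq_of_two_points {p p' : Point F} {l l' : Line F} (h₁ : Incident p l)
    (h₂ : Incident p l') (h₃ : Incident p' l) (h₄ : Incident p' l') (hp : p ≠ p') : l = l' := by
  have hd : p.a * p'.b - p'.a * p.b ≠ 0 := fun h =>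
    hp (eq_of_det_eq_zero h₁ h₃ (sub_eq_zero.mp h))
  obtain ⟨a1, a2⟩ := h₁
  obtain ⟨b1, b2⟩ := h₂
  obtain ⟨c1, c2⟩ := h₃
  obtain ⟨d1, d2⟩ := h₄
  refine Line.ext ?_ ?_ ?_ ?_ <;> apply mul_right_cancel₀ hd
  · linear_combination p'.b * (a1 - b1) - p.b * (c1 - d1)
  · linear_combination p.a * (c1 - d1) - p'.a * (a1 - b1)
  · linear_combination p'.b * (a2 - b2) - p.b * (c2 - d2)
  · linear_combination p.a * (c2 - d2) - p'.a * (a2 - b2)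

/-- The symplectic form on representatives of points. -/
def form (p p' : Point F) : F :=
  (p.a * p'.b - p'.a * p.b) - (p.c * (p'.b + 1) - p'.c * (p.b + 1))

lemma form_eq_zero {p p' : Point F} {l : Line F} (h : Incident p l) (h' : Incident p' l) :
    form p p' = 0 := by
  rw [form, ← h.1, ← h.2, ← h'.1, ← h'.2]
  linear_combination -(p.a * p'.b - p'.a * p.b) * l.det_eq

/-- A point orthogonal to two distinct points of a line lies on that line. -/
lemma incident_of_form_eq_zero {p p' r : Point F} {l : Line F} (h : Incident p l)
    (h' : Incident p' l) (hp : p ≠ p') (hr : form p r = 0) (hr' : form p' r = 0) :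
    Incident r l := by
  have hd : p.a * p'.b - p'.a * p.b ≠ 0 := fun e =>
    hp (eq_of_det_eq_zero h h' (sub_eq_zero.mp e))
  rw [form, ← h.1, ← h.2] at hr
  rw [form, ← h'.1, ← h'.2] at hr'
  have e1 : r.b - (l.α * (r.b + 1) - r.c * l.γ) = 0 := by
    apply (mul_eq_zero_iff_left hd).mp
    linear_combination p'.b * hr - p.b * hr'
  have e2 : -r.a - (l.β * (r.b + 1) - r.c * l.δ) = 0 := by
    apply (mul_eq_zero_iff_left hd).mp
    linear_combination p.a * hr' - p'.a * hr
  constructor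
  · linear_combination -l.α * e2 + l.β * e1 + r.c * l.det_eq
  · linear_combination -l.γ * e2 + l.δ * e1 + (r.b + 1) * l.det_eq

lemma no_triangle {p₁ p₂ p₃ : Point F} {l₁ l₂ l₃ : Line F} (h₁ : Incident p₁ l₁)
    (h₂ : Incident p₂ l₁) (h₃ : Incident p₂ l₂) (h₄ : Incident p₃ l₂) (h₅ : Incident p₃ l₃)
    (h₆ : Incident p₁ l₃) (h₁₂ : p₁ ≠ p₂) (h₁₃ : p₁ ≠ p₃) : l₁ = l₃ :=
  line_eq_of_two_points h₁ h₆
    (incident_of_form_eq_zero h₁ h₂ h₁₂ (form_eq_zero h₆ h₅) (form_eq_zero h₃ h₄)) h₅ h₁₃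

lemma egirth_eq_eight {t : F} (h0 : t ≠ 0) (h1 : t ≠ 1) :
    (incidenceGraph (Incident (F := F))).egirth = 8 := by
  refine le_antisymm ?_ (eight_le_egirth_incidenceGraph
    (fun _ _ _ _ => line_eq_of_two_points)
    (fun _ _ _ _ _ _ h₁ h₂ h₃ h₄ h₅ h₆ h₁₂ h₁₃ =>
      no_triangle h₁ h₂ h₃ h₄ h₅ h₆ h₁₂ h₁₃))
  have h2 : 1 - t ≠ 0 := sub_ne_zero.mpr h1.symm
  have h3 : -t + 1 ≠ 0 := by rwa [neg_add_eq_sub]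
  let line (β γ : F) (hγ : γ ≠ 0) (hβ : β = 0 ∨ β = -1 / (1 - t)) : Line F :=
    { α := -t / (1 - t)
      β := β
      γ := γ
      δ := (1 - t) * (1 + β * γ) / (-t)
      det_eq := by field_simp; ring
      not_fix := fun h => hγ h.2 }
  let p₁ : Point F := ⟨1 - t, 0, -t, by simp [h2], by simp⟩
  let p₂ : Point F := ⟨0, -t, 0, by simp [h0], by simp [h3]⟩
  let p₃ : Point F := ⟨t * (1 - t), 0, t * -t, by simp [h0, h2], by simp⟩
  let p₄ : Point F := ⟨1, -t, 0, by simp, by simp [h3]⟩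
  have hγ : 1 / (1 - t) ≠ 0 := by simp [h2]
  have hγ' : 1 / (t * (1 - t)) ≠ 0 := by simp [h2, h0]
  have hγγ : 1 / (1 - t) ≠ 1 / (t * (1 - t)) := by
    intro h
    field_simp at h
    exact h1 h
  have hβ : (0 : F) ≠ -1 / (1 - t) := by
    intro h
    field_simp at h
    simp at h
  refine egirth_incidenceGraph_le_eight (p₁ := p₁) (p₂ := p₂) (p₃ := p₃) (p₄ := p₄)
    (l₁ := line 0 _ hγ (.inl rfl)) (l₂ := line 0 _ hγ' (.inl rfl))
    (l₃ := line _ _ hγ' (.inr rfl)) (l₄ := line _ _ hγ (.inr rfl)) ?_ ?_ ?_ ?_ ?_ ?_ ?_ ?_ ?_ ?_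
  case refine_9 => simp [p₁, p₂, p₃, p₄, h0, h2, h1]
  case refine_10 =>
    simp only [line, List.nodup_cons, List.mem_cons, List.not_mem_nil, Line.mk.injEq]
    grind
  all_goals constructor <;> simp [line, p₁, p₂, p₃, p₄] <;> field_simp <;> ring

lemma ncard_eq_of_range_eq {α β : Type} {s : Set α} (f : β → α) (hf : f.Injective)
    (hs : ∀ x, x ∈ s ↔ ∃ y, f y = x) : s.ncard = Nat.card β := by
  rw [show s = Set.range f from Set.ext hs, ← Set.image_univ, Set.ncard_image_of_injective _ hf,
    Set.ncard_univ]

lemma ncard_points_on_line (l : Line F) : {p | Incident p l}.ncard = Nat.card F := by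
  obtain ⟨α, β, γ, δ, hd, hf⟩ := l
  by_cases hγ : γ = 0
  · have hδ : δ - 1 ≠ 0 := by grind
    refine ncard_eq_of_range_eq (fun a => ⟨a, 1 / (δ - 1), α * a + β * (1 / (δ - 1)), by simp [hδ],
      by field_simp; grind⟩) (fun x y h => by simpa using congrArg Point.a h) ?_
    rintro ⟨a, b, c, h, h'⟩
    simp [Incident]
    grind
  · refine ncard_eq_of_range_eq (fun b => ⟨(1 - (δ - 1) * b) / γ, b,
      α * ((1 - (δ - 1) * b) / γ) + β * b, by grind,
      by grind⟩) (fun x y h => by simpa using congrArg Point.b h) ?_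
    rintro ⟨a, b, c, h, h'⟩
    simp [Incident]
    grind

lemma ncard_lines_through_point (p : Point F) : {l | Incident p l}.ncard = Nat.card F := by
  obtain ⟨a, b, c, hu, hw⟩ := p
  by_cases ha : a = 0
  · have hb : b ≠ 0 := by grind
    by_cases hc : c = 0
    · have hd : b + 1 ≠ 0 := by grind
      refine ncard_eq_of_range_eq (fun γ => ⟨b / (b + 1), 0, γ, (b + 1) / b, by grind, by grind⟩)
        (fun x y h => by simpa using congrArg Line.γ h) ?_
      rintro ⟨α, β, γ, δ, h, h'⟩
      simp [Incident]
      grind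
    · refine ncard_eq_of_range_eq (fun α => ⟨α, c / b, (α * (b + 1) - b) / c, (b + 1) / b,
        by grind, by grind⟩)
        (fun x y h => by simpa using congrArg Line.α h) ?_
      rintro ⟨α, β, γ, δ, h, h'⟩
      simp [Incident]
      grind
  · by_cases hc : c = 0
    · have hd : b + 1 ≠ 0 := by grind
      refine ncard_eq_of_range_eq (fun δ => ⟨a * b / ((b + 1) * a), -a / (b + 1),
        (b + 1 - δ * b) / a, δ, by grind, by grind⟩)
        (fun x y h => by simpa using congrArg Line.δ h) ?_
      rintro ⟨α, β, γ, δ, h, h'⟩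
      simp [Incident]
      grind
    · refine ncard_eq_of_range_eq (fun β => ⟨(c - β * b) / a, β,
        (b + 1 - (a + β * (b + 1)) / c * b) / a, (a + β * (b + 1)) / c, by grind, by grind⟩)
        (fun x y h => by simpa using congrArg Line.β h) ?_
      rintro ⟨α, β, γ, δ, h, h'⟩
      simp [Incident]
      grind

lemma ncard_neighborSet (v : Point F ⊕ Line F) :
    ((incidenceGraph Incident).neighborSet v).ncard = Nat.card F := by
  rcases v with p | l
  · rw [← ncard_lines_through_point p, ← Set.ncard_image_of_injective
      {x | Incident p x} Sum.inr_injective]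
    refine congrArg Set.ncard (Set.ext ?_)
    rintro (x | x) <;> simp [incidenceGraph]
  · rw [← ncard_points_on_line l, ← Set.ncard_image_of_injective
      {x | Incident x l} Sum.inl_injective]
    refine congrArg Set.ncard (Set.ext ?_)
    rintro (x | x) <;> simp [incidenceGraph]

lemma Point.coords_injective :
    Function.Injective (fun p : Point F => (p.a, p.b, p.c)) := fun p p' h => by
  simp only [Prod.mk.injEq] at h
  exact Point.ext h.1 h.2.1 h.2.2

lemma Line.coords_injective :
    Function.Injective (fun l : Line F => (l.α, l.β, l.γ, l.δ)) := fun l l' h => by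
  simp only [Prod.mk.injEq] at h
  exact Line.ext h.1 h.2.1 h.2.2.1 h.2.2.2

instance [Finite F] : Finite (Point F) := .of_injective _ Point.coords_injective

instance [Finite F] : Finite (Line F) := .of_injective _ Line.coords_injective

/-- All triples arise from points and from the two excluded families with a zero component. -/
noncomputable def triplesEquiv : F × F × F ≃ Point F ⊕ F ⊕ F := by
  classical
  exact
  { toFun := fun x =>
      if h : x.1 = 0 ∧ x.2.1 = 0 then .inr (.inl x.2.2)
      else if h' : x.2.2 = 0 ∧ x.2.1 + 1 = 0 then .inr (.inr x.1)
      else .inl ⟨x.1, x.2.1, x.2.2, h, h'⟩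
    invFun := Sum.elim (fun p => (p.a, p.b, p.c))
      (Sum.elim (fun c => (0, 0, c)) fun a => (a, -1, 0))
    left_inv := by
      rintro ⟨a, b, c⟩
      dsimp only
      split_ifs with h h' <;> simp <;> grind
    right_inv := by
      rintro (⟨a, b, c, h, h'⟩ | c | a) <;> simp [*] }

lemma card_point [Finite F] :
    Nat.card (Point F) = Nat.card F * (Nat.card F ^ 2 - 2) := by
  have h := Nat.card_congr (triplesEquiv (F := F))
  simp only [Nat.card_prod, Nat.card_sum] at h
  rw [Nat.mul_sub, pow_two]
  omega

lemma card_line [Finite F] : Nat.card (Line F) = Nat.card (Point F) := by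
  classical
  have := Fintype.ofFinite (Point F)
  have := Fintype.ofFinite (Line F)
  have h := Finset.card_mul_eq_card_mul (s := (Finset.univ : Finset (Point F)))
    (t := (Finset.univ : Finset (Line F))) Incident (m := Nat.card F) (n := Nat.card F)
    (fun p _ => by
      rw [← ncard_lines_through_point p, ← Set.ncard_coe_finset]
      simp [Finset.bipartiteAbove])
    (fun l _ => by
      rw [← ncard_points_on_line l, ← Set.ncard_coe_finset]
      simp [Finset.bipartiteBelow])
  simp only [Finset.card_univ, ← Nat.card_eq_fintype_card] at h
  exact (Nat.eq_of_mul_eq_mul_right Nat.card_pos h).symm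

end SymplecticQuadrangle

open SymplecticQuadrangle in
/-- For every prime power `q ≥ 4` there is a finite `q`-regular graph of girth `8`
with exactly `2q(q² - 2)` vertices. -/
theorem exists_q_regular_girth_eight_graph (q : ℕ) (hq : IsPrimePow q) (h4 : 4 ≤ q) :
    ∃ (V : Type) (G : SimpleGraph V), Finite V ∧
      (∀ v : V, (G.neighborSet v).ncard = q) ∧ G.girth = 8 ∧
      Nat.card V = 2 * q * (q ^ 2 - 2) := by
  obtain ⟨p, n, hp, hn, rfl⟩ := (isPrimePow_nat_iff q).mp hq
  have : Fact p.Prime := ⟨hp⟩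
  have hF : Nat.card (GaloisField p n) = p ^ n := GaloisField.card p n hn.ne'
  have : Finite (GaloisField p n) := Nat.finite_of_card_ne_zero (by omega)
  have := Fintype.ofFinite (GaloisField p n)
  classical
  obtain ⟨t, ht⟩ : ∃ t, t ∉ ({0, 1} : Finset (GaloisField p n)) := by
    by_contra! h
    have := Finset.card_le_card (fun x _ => h x : Finset.univ ⊆ _)
    rw [Finset.card_univ, ← Nat.card_eq_fintype_card, hF] at this
    have := Finset.card_le_two (a := (0 : GaloisField p n)) (b := 1)
    omega
  simp only [Finset.mem_insert, Finset.mem_singleton, not_or] at ht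
  refine ⟨_, incidenceGraph (Incident (F := GaloisField p n)), inferInstance,
    fun v => by rw [ncard_neighborSet, hF], ?_, ?_⟩
  · rw [SimpleGraph.girth, egirth_eq_eight ht.1 ht.2]
    rfl
  · rw [Nat.card_sum, card_line, card_point, hF]
    ring
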